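/- arXiv:1409.5184 — 2 statements merged into one kernel-verified Lean document; each statement's English description precedes it below -/
import Mathlib

section
/- Let (H,α) be a monoidal Hom-Hopf algebra, (A,β) a right (H,α)-Hom-comodule algebra, and (N,ν) a right (H,A)-Hom-Hopf module. Regard N as a left (H,α)-Hom-comodule via n↦S(n₍₁₎)⊗n₍₀₎. Then: (i) the map i: N^{coH}→A□_H N, i(n)=1_A⊗ν⁻¹(n), is well defined (its image lies in the cotensor product); (ii) the map p: A□_H N→N^{coH}, p(Σa⊗n)=Σn·a, is well defined — in particular for Σa⊗n∈A□_H N one has ρ_N(Σn·a)=Σν⁻¹(n·a)⊗1_H; (iii) p∘i = id on N^{coH}. -/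
open TensorProduct

noncomputable section

/-- A (unital) monoidal Hom-bialgebra, following Caenepeel–Goyvaerts.
The algebra axioms are stated pointwise, the coalgebra axioms at the level of
linear maps (using the standard vector-space associator to compare the two
sides of Hom-coassociativity). -/
structure MonoidalHomBialgebra (k : Type) [Field k] (H : Type) [AddCommGroup H] [Module k H] where
  mul : H →ₗ[k] H →ₗ[k] H
  one : H
  comul : H →ₗ[k] H ⊗[k] H
  counit : H →ₗ[k] k
  aut : H ≃ₗ[k] H
  hom_assoc : ∀ a b c, mul (aut a) (mul b c) = mul (mul a b) (aut c)
  mulOne : ∀ a, mul a one = aut a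
  oneMul : ∀ a, mul one a = aut a
  aut_mul : ∀ a b, aut (mul a b) = mul (aut a) (aut b)
  aut_one : aut one = one
  coassoc :
    (TensorProduct.assoc k H H H).toLinearMap ∘ₗ
        (TensorProduct.map comul aut.symm.toLinearMap) ∘ₗ comul =
      (TensorProduct.map aut.symm.toLinearMap comul) ∘ₗ comul
  counit_left :
    (TensorProduct.lid k H).toLinearMap ∘ₗ (TensorProduct.map counit LinearMap.id) ∘ₗ comul =
      aut.symm.toLinearMap
  counit_right :
    (TensorProduct.rid k H).toLinearMap ∘ₗ (TensorProduct.map LinearMap.id counit) ∘ₗ comul =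
      aut.symm.toLinearMap
  comul_aut :
    comul ∘ₗ aut.toLinearMap = (TensorProduct.map aut.toLinearMap aut.toLinearMap) ∘ₗ comul
  counit_aut : counit ∘ₗ aut.toLinearMap = counit
  comul_mul :
    comul ∘ₗ TensorProduct.lift mul =
      (TensorProduct.map (TensorProduct.lift mul) (TensorProduct.lift mul)) ∘ₗ
        (TensorProduct.tensorTensorTensorComm k H H H H).toLinearMap ∘ₗ
          (TensorProduct.map comul comul)
  comul_one : comul one = one ⊗ₜ[k] one
  counit_mul : ∀ a b, counit (mul a b) = counit a * counit b
  counit_one : counit one = 1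

/-- A monoidal Hom-Hopf algebra: a monoidal Hom-bialgebra with an antipode. -/
structure MonoidalHomHopf (k : Type) [Field k] (H : Type) [AddCommGroup H] [Module k H]
    extends MonoidalHomBialgebra k H where
  antipode : H →ₗ[k] H
  antipode_aut : antipode ∘ₗ aut.toLinearMap = aut.toLinearMap ∘ₗ antipode
  antipode_mul_left :
    TensorProduct.lift mul ∘ₗ (TensorProduct.map antipode LinearMap.id) ∘ₗ comul =
      LinearMap.toSpanSingleton k H one ∘ₗ counit
  antipode_mul_right :
    TensorProduct.lift mul ∘ₗ (TensorProduct.map LinearMap.id antipode) ∘ₗ comul =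
      LinearMap.toSpanSingleton k H one ∘ₗ counit

variable {k : Type} [Field k] {H : Type} [AddCommGroup H] [Module k H]

/-- A right (H,α)-Hom-comodule. -/
structure HomComodule (Hb : MonoidalHomBialgebra k H) (M : Type) [AddCommGroup M] [Module k M] where
  coact : M →ₗ[k] M ⊗[k] H
  aut : M ≃ₗ[k] M
  coassoc :
    (TensorProduct.map aut.symm.toLinearMap Hb.comul) ∘ₗ coact =
      (TensorProduct.assoc k M H H).toLinearMap ∘ₗ
        (TensorProduct.map coact Hb.aut.symm.toLinearMap) ∘ₗ coact
  counit :
    (TensorProduct.rid k M).toLinearMap ∘ₗ (TensorProduct.map LinearMap.id Hb.counit) ∘ₗ coact =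
      aut.symm.toLinearMap
  coact_aut :
    coact ∘ₗ aut.toLinearMap = (TensorProduct.map aut.toLinearMap Hb.aut.toLinearMap) ∘ₗ coact

/-- A left (H,α)-Hom-comodule. -/
structure HomLeftComodule (Hb : MonoidalHomBialgebra k H) (M : Type) [AddCommGroup M] [Module k M] where
  coact : M →ₗ[k] H ⊗[k] M
  aut : M ≃ₗ[k] M
  coassoc :
    (TensorProduct.map Hb.comul aut.symm.toLinearMap) ∘ₗ coact =
      (TensorProduct.assoc k H H M).symm.toLinearMap ∘ₗ
        (TensorProduct.map Hb.aut.symm.toLinearMap coact) ∘ₗ coact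
  counit :
    (TensorProduct.lid k M).toLinearMap ∘ₗ (TensorProduct.map Hb.counit LinearMap.id) ∘ₗ coact =
      aut.symm.toLinearMap
  coact_aut :
    coact ∘ₗ aut.toLinearMap = (TensorProduct.map Hb.aut.toLinearMap aut.toLinearMap) ∘ₗ coact

/-- A right (H,α)-Hom-comodule algebra. -/
structure HomComoduleAlgebra (Hb : MonoidalHomBialgebra k H) (A : Type) [AddCommGroup A] [Module k A] where
  mul : A →ₗ[k] A →ₗ[k] A
  one : A
  aut : A ≃ₗ[k] A
  hom_assoc : ∀ a b c, mul (aut a) (mul b c) = mul (mul a b) (aut c)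
  mulOne : ∀ a, mul a one = aut a
  oneMul : ∀ a, mul one a = aut a
  aut_mul : ∀ a b, aut (mul a b) = mul (aut a) (aut b)
  aut_one : aut one = one
  coact : A →ₗ[k] A ⊗[k] H
  coassoc :
    (TensorProduct.map aut.symm.toLinearMap Hb.comul) ∘ₗ coact =
      (TensorProduct.assoc k A H H).toLinearMap ∘ₗ
        (TensorProduct.map coact Hb.aut.symm.toLinearMap) ∘ₗ coact
  counit :
    (TensorProduct.rid k A).toLinearMap ∘ₗ (TensorProduct.map LinearMap.id Hb.counit) ∘ₗ coact =
      aut.symm.toLinearMap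
  coact_aut :
    coact ∘ₗ aut.toLinearMap = (TensorProduct.map aut.toLinearMap Hb.aut.toLinearMap) ∘ₗ coact
  coact_mul :
    coact ∘ₗ TensorProduct.lift mul =
      (TensorProduct.map (TensorProduct.lift mul) (TensorProduct.lift Hb.mul)) ∘ₗ
        (TensorProduct.tensorTensorTensorComm k A H A H).toLinearMap ∘ₗ
          (TensorProduct.map coact coact)
  coact_one : coact one = one ⊗ₜ[k] Hb.one

variable {A : Type} [AddCommGroup A] [Module k A]

/-- A right (A,β)-Hom-module. -/
structure HomModule {Hb : MonoidalHomBialgebra k H} (Ac : HomComoduleAlgebra Hb A)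
    (M : Type) [AddCommGroup M] [Module k M] where
  act : M →ₗ[k] A →ₗ[k] M
  aut : M ≃ₗ[k] M
  act_act : ∀ m a b, act (act m a) (Ac.aut b) = act (aut m) (Ac.mul a b)
  act_one : ∀ m, act m Ac.one = aut m
  aut_act : ∀ m a, aut (act m a) = act (aut m) (Ac.aut a)

/-- A right Hom-module over the subalgebra of `A` carved out by `Bset`
(typically the coinvariants `B = A^{co H}`): the action is a bilinear map
`M × A → M` whose Hom-module axioms are only required on `Bset`. -/
structure HomModuleOn {Hb : MonoidalHomBialgebra k H} (Ac : HomComoduleAlgebra Hb A)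
    (Bset : Set A) (M : Type) [AddCommGroup M] [Module k M] where
  act : M →ₗ[k] A →ₗ[k] M
  aut : M ≃ₗ[k] M
  act_act : ∀ m, ∀ b ∈ Bset, ∀ b' ∈ Bset, act (act m b) (Ac.aut b') = act (aut m) (Ac.mul b b')
  act_one : ∀ m, act m Ac.one = aut m
  aut_act : ∀ m, ∀ b ∈ Bset, aut (act m b) = act (aut m) (Ac.aut b)

/-- A left Hom-module over the subalgebra of `A` carved out by `Bset`. -/
structure HomLeftModuleOn {Hb : MonoidalHomBialgebra k H} (Ac : HomComoduleAlgebra Hb A)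
    (Bset : Set A) (M : Type) [AddCommGroup M] [Module k M] where
  act : A →ₗ[k] M →ₗ[k] M
  aut : M ≃ₗ[k] M
  act_act : ∀ m, ∀ b ∈ Bset, ∀ b' ∈ Bset, act (Ac.aut b) (act b' m) = act (Ac.mul b b') (aut m)
  act_one : ∀ m, act Ac.one m = aut m
  aut_act : ∀ m, ∀ b ∈ Bset, aut (act b m) = act (Ac.aut b) (aut m)

/-- A right-right (H,A)-Hom-Hopf module (a relative Hom-Hopf module). -/
structure HomHopfModule {Hb : MonoidalHomBialgebra k H} (Ac : HomComoduleAlgebra Hb A)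
    (N : Type) [AddCommGroup N] [Module k N] where
  act : N →ₗ[k] A →ₗ[k] N
  aut : N ≃ₗ[k] N
  act_act : ∀ n a b, act (act n a) (Ac.aut b) = act (aut n) (Ac.mul a b)
  act_one : ∀ n, act n Ac.one = aut n
  aut_act : ∀ n a, aut (act n a) = act (aut n) (Ac.aut a)
  coact : N →ₗ[k] N ⊗[k] H
  coassoc :
    (TensorProduct.map aut.symm.toLinearMap Hb.comul) ∘ₗ coact =
      (TensorProduct.assoc k N H H).toLinearMap ∘ₗ
        (TensorProduct.map coact Hb.aut.symm.toLinearMap) ∘ₗ coact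
  counit :
    (TensorProduct.rid k N).toLinearMap ∘ₗ (TensorProduct.map LinearMap.id Hb.counit) ∘ₗ coact =
      aut.symm.toLinearMap
  coact_aut :
    coact ∘ₗ aut.toLinearMap = (TensorProduct.map aut.toLinearMap Hb.aut.toLinearMap) ∘ₗ coact
  compat :
    coact ∘ₗ TensorProduct.lift act =
      (TensorProduct.map (TensorProduct.lift act) (TensorProduct.lift Hb.mul)) ∘ₗ
        (TensorProduct.tensorTensorTensorComm k N H A H).toLinearMap ∘ₗ
          (TensorProduct.map coact Ac.coact)

/-- A left-right (H,A)-Hom-Hopf module. -/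
structure LRHomHopfModule {Hb : MonoidalHomBialgebra k H} (Ac : HomComoduleAlgebra Hb A)
    (N : Type) [AddCommGroup N] [Module k N] where
  act : A →ₗ[k] N →ₗ[k] N
  aut : N ≃ₗ[k] N
  act_act : ∀ n a b, act (Ac.aut a) (act b n) = act (Ac.mul a b) (aut n)
  act_one : ∀ n, act Ac.one n = aut n
  aut_act : ∀ n a, aut (act a n) = act (Ac.aut a) (aut n)
  coact : N →ₗ[k] N ⊗[k] H
  coassoc :
    (TensorProduct.map aut.symm.toLinearMap Hb.comul) ∘ₗ coact =
      (TensorProduct.assoc k N H H).toLinearMap ∘ₗ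
        (TensorProduct.map coact Hb.aut.symm.toLinearMap) ∘ₗ coact
  counit :
    (TensorProduct.rid k N).toLinearMap ∘ₗ (TensorProduct.map LinearMap.id Hb.counit) ∘ₗ coact =
      aut.symm.toLinearMap
  coact_aut :
    coact ∘ₗ aut.toLinearMap = (TensorProduct.map aut.toLinearMap Hb.aut.toLinearMap) ∘ₗ coact
  compat :
    coact ∘ₗ TensorProduct.lift act =
      (TensorProduct.map (TensorProduct.lift act) (TensorProduct.lift Hb.mul)) ∘ₗ
        (TensorProduct.tensorTensorTensorComm k A H N H).toLinearMap ∘ₗ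
          (TensorProduct.map Ac.coact coact)

/-- Coinvariants (as a set) of a coaction `coact` with structure automorphism `autM`. -/
def coinvSetOf {M : Type} [AddCommGroup M] [Module k M] (oneH : H)
    (coact : M →ₗ[k] M ⊗[k] H) (autM : M ≃ₗ[k] M) : Set M :=
  {m | coact m = autM.symm m ⊗ₜ[k] oneH}

/-- Coinvariants as a submodule. -/
def coinvSubmoduleOf {M : Type} [AddCommGroup M] [Module k M] (oneH : H)
    (coact : M →ₗ[k] M ⊗[k] H) (autM : M ≃ₗ[k] M) : Submodule k M :=
  LinearMap.ker (coact - ((TensorProduct.mk k M H).flip oneH) ∘ₗ autM.symm.toLinearMap)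

/-- The coinvariants `B = A^{co H}` of a Hom-comodule algebra. -/
def coinvA {Hb : MonoidalHomBialgebra k H} (Ac : HomComoduleAlgebra Hb A) : Set A :=
  coinvSetOf Hb.one Ac.coact Ac.aut

/-- The defining relations of the tensor product `M ⊗_B A` for a right `B`-Hom-module `M`. -/
def relSubR {M : Type} [AddCommGroup M] [Module k M]
    (mulA : A →ₗ[k] A →ₗ[k] A) (autA : A ≃ₗ[k] A) (Bset : Set A)
    (act : M →ₗ[k] A →ₗ[k] M) (autM : M ≃ₗ[k] M) : Submodule k (M ⊗[k] A) :=
  Submodule.span k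
    {x | ∃ m a b, b ∈ Bset ∧ x = act m b ⊗ₜ[k] autA a - autM m ⊗ₜ[k] mulA b a}

/-- The defining relations of the tensor product `A ⊗_B M` for a left `B`-Hom-module `M`. -/
def relSubL {M : Type} [AddCommGroup M] [Module k M]
    (mulA : A →ₗ[k] A →ₗ[k] A) (autA : A ≃ₗ[k] A) (Bset : Set A)
    (act : A →ₗ[k] M →ₗ[k] M) (autM : M ≃ₗ[k] M) : Submodule k (A ⊗[k] M) :=
  Submodule.span k
    {x | ∃ a m b, b ∈ Bset ∧ x = autA a ⊗ₜ[k] act b m - mulA a b ⊗ₜ[k] autM m}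

/-- The cotensor product `X □_H V` of a right Hom-comodule and a left Hom-comodule,
as a submodule of `X ⊗ V`. -/
def cotensorSub {X V : Type} [AddCommGroup X] [Module k X] [AddCommGroup V] [Module k V]
    (coactX : X →ₗ[k] X ⊗[k] H) (autX : X ≃ₗ[k] X)
    (coactV : V →ₗ[k] H ⊗[k] V) (autV : V ≃ₗ[k] V) : Submodule k (X ⊗[k] V) :=
  LinearMap.ker
    ((TensorProduct.map coactX autV.symm.toLinearMap) -
      ((TensorProduct.assoc k X H V).symm.toLinearMap ∘ₗ
        TensorProduct.map autX.symm.toLinearMap coactV))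

/-- The canonical Galois map at the level of `A ⊗ A`:
`a ⊗ b ↦ β⁻¹(a)·b₍₀₎ ⊗ α(b₍₁₎)`. -/
def canPreLin {Hb : MonoidalHomBialgebra k H} (Ac : HomComoduleAlgebra Hb A) :
    A ⊗[k] A →ₗ[k] A ⊗[k] H :=
  (TensorProduct.map (TensorProduct.lift Ac.mul) Hb.aut.toLinearMap) ∘ₗ
    (TensorProduct.assoc k A A H).symm.toLinearMap ∘ₗ
      (TensorProduct.map Ac.aut.symm.toLinearMap Ac.coact)

/-- The second canonical Galois map at the level of `A ⊗ A`:
`a ⊗ b ↦ a₍₀₎·β⁻¹(b) ⊗ α(a₍₁₎)`. -/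
def canPreLin' {Hb : MonoidalHomBialgebra k H} (Ac : HomComoduleAlgebra Hb A) :
    A ⊗[k] A →ₗ[k] A ⊗[k] H :=
  (TensorProduct.map (TensorProduct.lift Ac.mul) Hb.aut.toLinearMap) ∘ₗ
    (TensorProduct.assoc k A A H).symm.toLinearMap ∘ₗ
      (TensorProduct.map LinearMap.id (TensorProduct.comm k H A).toLinearMap) ∘ₗ
        (TensorProduct.assoc k A H A).toLinearMap ∘ₗ
          (TensorProduct.map Ac.coact Ac.aut.symm.toLinearMap)

/-- `φ : H → A` is a total integral. -/
def IsTotalIntegral {Hb : MonoidalHomBialgebra k H} (Ac : HomComoduleAlgebra Hb A)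
    (φ : H →ₗ[k] A) : Prop :=
  φ ∘ₗ Hb.aut.toLinearMap = Ac.aut.toLinearMap ∘ₗ φ ∧
    Ac.coact ∘ₗ φ = (TensorProduct.map φ LinearMap.id) ∘ₗ Hb.comul ∧
      φ Hb.one = Ac.one

/-- The Hom-comodule structure on `M ⊗ A` inducing that of `M ⊗_B A`:
`m ⊗ a ↦ (μ⁻¹(m) ⊗ a₍₀₎) ⊗ α(a₍₁₎)`. -/
def quotCoactPreR {Hb : MonoidalHomBialgebra k H} (Ac : HomComoduleAlgebra Hb A)
    {M : Type} [AddCommGroup M] [Module k M] (autM : M ≃ₗ[k] M) :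
    (M ⊗[k] A) →ₗ[k] (M ⊗[k] A) ⊗[k] H :=
  (TensorProduct.assoc k M A H).symm.toLinearMap ∘ₗ
    TensorProduct.map autM.symm.toLinearMap
      ((TensorProduct.map LinearMap.id Hb.aut.toLinearMap) ∘ₗ Ac.coact)

/-- The Hom-comodule structure on `A ⊗ M` inducing that of `A ⊗_B M`:
`a ⊗ m ↦ (a₍₀₎ ⊗ μ⁻¹(m)) ⊗ α(a₍₁₎)`. -/
def quotCoactPreL {Hb : MonoidalHomBialgebra k H} (Ac : HomComoduleAlgebra Hb A)
    {M : Type} [AddCommGroup M] [Module k M] (autM : M ≃ₗ[k] M) :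
    (A ⊗[k] M) →ₗ[k] (A ⊗[k] M) ⊗[k] H :=
  (TensorProduct.assoc k A M H).symm.toLinearMap ∘ₗ
    (TensorProduct.map LinearMap.id (TensorProduct.comm k H M).toLinearMap) ∘ₗ
      (TensorProduct.assoc k A H M).toLinearMap ∘ₗ
        TensorProduct.map
          ((TensorProduct.map LinearMap.id Hb.aut.toLinearMap) ∘ₗ Ac.coact)
          autM.symm.toLinearMap

/-- Bijectivity of the adjunction unit `η_M : M → (M ⊗_B A)^{co H}`, `m ↦ μ⁻¹(m) ⊗ 1_A`,
for a right `B`-Hom-module `M`.  Since the Hom-comodule structure of `M ⊗_B A` is the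
one induced from `M ⊗ A`, it is quantified over all maps `ρbar` (resp. `θ`) induced by
the comodule structure (resp. by `μ⁻¹ ⊗ β⁻¹`) on `M ⊗ A`. -/
def UnitBijectiveR {Hb : MonoidalHomBialgebra k H} (Ac : HomComoduleAlgebra Hb A)
    (Bset : Set A) {M : Type} [AddCommGroup M] [Module k M]
    (S : HomModuleOn Ac Bset M) : Prop :=
  ∀ (ρbar : ((M ⊗[k] A) ⧸ relSubR Ac.mul Ac.aut Bset S.act S.aut) →ₗ[k]
      ((M ⊗[k] A) ⧸ relSubR Ac.mul Ac.aut Bset S.act S.aut) ⊗[k] H)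
    (θ : ((M ⊗[k] A) ⧸ relSubR Ac.mul Ac.aut Bset S.act S.aut) →ₗ[k]
      ((M ⊗[k] A) ⧸ relSubR Ac.mul Ac.aut Bset S.act S.aut)),
    ρbar ∘ₗ (relSubR Ac.mul Ac.aut Bset S.act S.aut).mkQ =
      (TensorProduct.map (relSubR Ac.mul Ac.aut Bset S.act S.aut).mkQ LinearMap.id) ∘ₗ
        quotCoactPreR Ac S.aut →
    θ ∘ₗ (relSubR Ac.mul Ac.aut Bset S.act S.aut).mkQ =
      (relSubR Ac.mul Ac.aut Bset S.act S.aut).mkQ ∘ₗ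
        TensorProduct.map S.aut.symm.toLinearMap Ac.aut.symm.toLinearMap →
    ((∀ m : M, ρbar ((relSubR Ac.mul Ac.aut Bset S.act S.aut).mkQ (S.aut.symm m ⊗ₜ[k] Ac.one)) =
        θ ((relSubR Ac.mul Ac.aut Bset S.act S.aut).mkQ (S.aut.symm m ⊗ₜ[k] Ac.one)) ⊗ₜ[k] Hb.one) ∧
      Function.Injective
        (fun m : M => (relSubR Ac.mul Ac.aut Bset S.act S.aut).mkQ (S.aut.symm m ⊗ₜ[k] Ac.one)) ∧
      ∀ x, ρbar x = θ x ⊗ₜ[k] Hb.one →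
        ∃ m : M, (relSubR Ac.mul Ac.aut Bset S.act S.aut).mkQ (S.aut.symm m ⊗ₜ[k] Ac.one) = x)

/-- The relations of `N^{co H} ⊗_B A` for a right (H,A)-Hom-Hopf module `N`;
the closure of the coinvariants under the `B`-action and the automorphism is
encoded by existential membership. -/
def relCoinvR {Hb : MonoidalHomBialgebra k H} (Ac : HomComoduleAlgebra Hb A)
    (Bset : Set A) {N : Type} [AddCommGroup N] [Module k N]
    (P : HomHopfModule Ac N) :
    Submodule k ((coinvSubmoduleOf Hb.one P.coact P.aut : Submodule k N) ⊗[k] A) :=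
  Submodule.span k
    {x | ∃ (n n' n'' : coinvSubmoduleOf Hb.one P.coact P.aut) (a b : A), b ∈ Bset ∧
      (n' : N) = P.act n b ∧ (n'' : N) = P.aut n ∧
      x = n' ⊗ₜ[k] Ac.aut a - n'' ⊗ₜ[k] Ac.mul b a}

/-- The counit of the adjunction at the level of `N^{co H} ⊗ A`: `n ⊗ a ↦ n · a`. -/
def counitPre {Hb : MonoidalHomBialgebra k H} (Ac : HomComoduleAlgebra Hb A)
    {N : Type} [AddCommGroup N] [Module k N] (P : HomHopfModule Ac N) :
    ((coinvSubmoduleOf Hb.one P.coact P.aut : Submodule k N) ⊗[k] A) →ₗ[k] N :=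
  TensorProduct.lift (P.act ∘ₗ (coinvSubmoduleOf Hb.one P.coact P.aut).subtype)

/-- Bijectivity of the adjunction counit `ε_N : N^{co H} ⊗_B A → N`, `n ⊗ a ↦ n·a`:
equivalently, the lift `N^{co H} ⊗ A → N` is surjective and its kernel is exactly
the defining relations of `⊗_B`. -/
def CounitBijectiveR {Hb : MonoidalHomBialgebra k H} (Ac : HomComoduleAlgebra Hb A)
    (Bset : Set A) {N : Type} [AddCommGroup N] [Module k N]
    (P : HomHopfModule Ac N) : Prop :=
  Function.Surjective (counitPre Ac P) ∧ LinearMap.ker (counitPre Ac P) = relCoinvR Ac Bset P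

/-- Bijectivity of the adjunction unit `η'_M : M → (A ⊗_B M)^{co H}`, `m ↦ 1_A ⊗ μ⁻¹(m)`,
for a left `B`-Hom-module `M`. -/
def UnitBijectiveL {Hb : MonoidalHomBialgebra k H} (Ac : HomComoduleAlgebra Hb A)
    (Bset : Set A) {M : Type} [AddCommGroup M] [Module k M]
    (S : HomLeftModuleOn Ac Bset M) : Prop :=
  ∀ (ρbar : ((A ⊗[k] M) ⧸ relSubL Ac.mul Ac.aut Bset S.act S.aut) →ₗ[k]
      ((A ⊗[k] M) ⧸ relSubL Ac.mul Ac.aut Bset S.act S.aut) ⊗[k] H)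
    (θ : ((A ⊗[k] M) ⧸ relSubL Ac.mul Ac.aut Bset S.act S.aut) →ₗ[k]
      ((A ⊗[k] M) ⧸ relSubL Ac.mul Ac.aut Bset S.act S.aut)),
    ρbar ∘ₗ (relSubL Ac.mul Ac.aut Bset S.act S.aut).mkQ =
      (TensorProduct.map (relSubL Ac.mul Ac.aut Bset S.act S.aut).mkQ LinearMap.id) ∘ₗ
        quotCoactPreL Ac S.aut →
    θ ∘ₗ (relSubL Ac.mul Ac.aut Bset S.act S.aut).mkQ =
      (relSubL Ac.mul Ac.aut Bset S.act S.aut).mkQ ∘ₗ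
        TensorProduct.map Ac.aut.symm.toLinearMap S.aut.symm.toLinearMap →
    ((∀ m : M, ρbar ((relSubL Ac.mul Ac.aut Bset S.act S.aut).mkQ (Ac.one ⊗ₜ[k] S.aut.symm m)) =
        θ ((relSubL Ac.mul Ac.aut Bset S.act S.aut).mkQ (Ac.one ⊗ₜ[k] S.aut.symm m)) ⊗ₜ[k] Hb.one) ∧
      Function.Injective
        (fun m : M => (relSubL Ac.mul Ac.aut Bset S.act S.aut).mkQ (Ac.one ⊗ₜ[k] S.aut.symm m)) ∧
      ∀ x, ρbar x = θ x ⊗ₜ[k] Hb.one →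
        ∃ m : M, (relSubL Ac.mul Ac.aut Bset S.act S.aut).mkQ (Ac.one ⊗ₜ[k] S.aut.symm m) = x)

/-- The relations of `A ⊗_B N^{co H}` for a left-right (H,A)-Hom-Hopf module `N`. -/
def relCoinvL {Hb : MonoidalHomBialgebra k H} (Ac : HomComoduleAlgebra Hb A)
    (Bset : Set A) {N : Type} [AddCommGroup N] [Module k N]
    (P : LRHomHopfModule Ac N) :
    Submodule k (A ⊗[k] (coinvSubmoduleOf Hb.one P.coact P.aut : Submodule k N)) :=
  Submodule.span k
    {x | ∃ (n n' n'' : coinvSubmoduleOf Hb.one P.coact P.aut) (a b : A), b ∈ Bset ∧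
      (n' : N) = P.act b n ∧ (n'' : N) = P.aut n ∧
      x = Ac.aut a ⊗ₜ[k] n' - Ac.mul a b ⊗ₜ[k] n''}

/-- The counit at the level of `A ⊗ N^{co H}`: `a ⊗ n ↦ a · n`. -/
def counitPreL {Hb : MonoidalHomBialgebra k H} (Ac : HomComoduleAlgebra Hb A)
    {N : Type} [AddCommGroup N] [Module k N] (P : LRHomHopfModule Ac N) :
    (A ⊗[k] (coinvSubmoduleOf Hb.one P.coact P.aut : Submodule k N)) →ₗ[k] N :=
  TensorProduct.lift (P.act.compl₂ (coinvSubmoduleOf Hb.one P.coact P.aut).subtype)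

/-- Bijectivity of the counit `ε'_N : A ⊗_B N^{co H} → N`. -/
def CounitBijectiveL {Hb : MonoidalHomBialgebra k H} (Ac : HomComoduleAlgebra Hb A)
    (Bset : Set A) {N : Type} [AddCommGroup N] [Module k N]
    (P : LRHomHopfModule Ac N) : Prop :=
  Function.Surjective (counitPreL Ac P) ∧ LinearMap.ker (counitPreL Ac P) = relCoinvL Ac Bset P

/-- A morphism of right `B`-Hom-modules. -/
def IsHomModuleOnHomR {Hb : MonoidalHomBialgebra k H} (Ac : HomComoduleAlgebra Hb A)
    (Bset : Set A) {M₁ M₂ : Type} [AddCommGroup M₁] [Module k M₁] [AddCommGroup M₂] [Module k M₂]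
    (S₁ : HomModuleOn Ac Bset M₁) (S₂ : HomModuleOn Ac Bset M₂) (f : M₁ →ₗ[k] M₂) : Prop :=
  (∀ m, ∀ b ∈ Bset, f (S₁.act m b) = S₂.act (f m) b) ∧ ∀ m, f (S₁.aut m) = S₂.aut (f m)

/-- A morphism of left `B`-Hom-modules. -/
def IsHomModuleOnHomL {Hb : MonoidalHomBialgebra k H} (Ac : HomComoduleAlgebra Hb A)
    (Bset : Set A) {M₁ M₂ : Type} [AddCommGroup M₁] [Module k M₁] [AddCommGroup M₂] [Module k M₂]
    (S₁ : HomLeftModuleOn Ac Bset M₁) (S₂ : HomLeftModuleOn Ac Bset M₂) (f : M₁ →ₗ[k] M₂) : Prop :=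
  (∀ m, ∀ b ∈ Bset, f (S₁.act b m) = S₂.act b (f m)) ∧ ∀ m, f (S₁.aut m) = S₂.aut (f m)

/-- `A` is faithfully flat as a left `B`-Hom-module: the induced functor `− ⊗_B A`
on right `B`-Hom-modules preserves and reflects exactness. -/
def FaithfullyFlatLeftOf {Hb : MonoidalHomBialgebra k H} (Ac : HomComoduleAlgebra Hb A)
    (Bset : Set A) : Prop :=
  ∀ (M₁ M₂ M₃ : Type) [AddCommGroup M₁] [Module k M₁] [AddCommGroup M₂] [Module k M₂]
    [AddCommGroup M₃] [Module k M₃]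
    (S₁ : HomModuleOn Ac Bset M₁) (S₂ : HomModuleOn Ac Bset M₂) (S₃ : HomModuleOn Ac Bset M₃)
    (f : M₁ →ₗ[k] M₂) (g : M₂ →ₗ[k] M₃),
    IsHomModuleOnHomR Ac Bset S₁ S₂ f → IsHomModuleOnHomR Ac Bset S₂ S₃ g →
    ∀ (fbar : ((M₁ ⊗[k] A) ⧸ relSubR Ac.mul Ac.aut Bset S₁.act S₁.aut) →ₗ[k]
        ((M₂ ⊗[k] A) ⧸ relSubR Ac.mul Ac.aut Bset S₂.act S₂.aut))
      (gbar : ((M₂ ⊗[k] A) ⧸ relSubR Ac.mul Ac.aut Bset S₂.act S₂.aut) →ₗ[k]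
        ((M₃ ⊗[k] A) ⧸ relSubR Ac.mul Ac.aut Bset S₃.act S₃.aut)),
      fbar ∘ₗ (relSubR Ac.mul Ac.aut Bset S₁.act S₁.aut).mkQ =
        (relSubR Ac.mul Ac.aut Bset S₂.act S₂.aut).mkQ ∘ₗ TensorProduct.map f LinearMap.id →
      gbar ∘ₗ (relSubR Ac.mul Ac.aut Bset S₂.act S₂.aut).mkQ =
        (relSubR Ac.mul Ac.aut Bset S₃.act S₃.aut).mkQ ∘ₗ TensorProduct.map g LinearMap.id →
      (LinearMap.range f = LinearMap.ker g ↔ LinearMap.range fbar = LinearMap.ker gbar)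

/-- `A` is faithfully flat as a right `B`-Hom-module: the induced functor `A ⊗_B −`
on left `B`-Hom-modules preserves and reflects exactness. -/
def FaithfullyFlatRightOf {Hb : MonoidalHomBialgebra k H} (Ac : HomComoduleAlgebra Hb A)
    (Bset : Set A) : Prop :=
  ∀ (M₁ M₂ M₃ : Type) [AddCommGroup M₁] [Module k M₁] [AddCommGroup M₂] [Module k M₂]
    [AddCommGroup M₃] [Module k M₃]
    (S₁ : HomLeftModuleOn Ac Bset M₁) (S₂ : HomLeftModuleOn Ac Bset M₂)
    (S₃ : HomLeftModuleOn Ac Bset M₃)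
    (f : M₁ →ₗ[k] M₂) (g : M₂ →ₗ[k] M₃),
    IsHomModuleOnHomL Ac Bset S₁ S₂ f → IsHomModuleOnHomL Ac Bset S₂ S₃ g →
    ∀ (fbar : ((A ⊗[k] M₁) ⧸ relSubL Ac.mul Ac.aut Bset S₁.act S₁.aut) →ₗ[k]
        ((A ⊗[k] M₂) ⧸ relSubL Ac.mul Ac.aut Bset S₂.act S₂.aut))
      (gbar : ((A ⊗[k] M₂) ⧸ relSubL Ac.mul Ac.aut Bset S₂.act S₂.aut) →ₗ[k]
        ((A ⊗[k] M₃) ⧸ relSubL Ac.mul Ac.aut Bset S₃.act S₃.aut)),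
      fbar ∘ₗ (relSubL Ac.mul Ac.aut Bset S₁.act S₁.aut).mkQ =
        (relSubL Ac.mul Ac.aut Bset S₂.act S₂.aut).mkQ ∘ₗ TensorProduct.map LinearMap.id f →
      gbar ∘ₗ (relSubL Ac.mul Ac.aut Bset S₂.act S₂.aut).mkQ =
        (relSubL Ac.mul Ac.aut Bset S₃.act S₃.aut).mkQ ∘ₗ TensorProduct.map LinearMap.id g →
      (LinearMap.range f = LinearMap.ker g ↔ LinearMap.range fbar = LinearMap.ker gbar)

/-- `A` is flat as a left `B`-Hom-module: `− ⊗_B A` preserves exactness. -/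
def FlatLeftOf {Hb : MonoidalHomBialgebra k H} (Ac : HomComoduleAlgebra Hb A)
    (Bset : Set A) : Prop :=
  ∀ (M₁ M₂ M₃ : Type) [AddCommGroup M₁] [Module k M₁] [AddCommGroup M₂] [Module k M₂]
    [AddCommGroup M₃] [Module k M₃]
    (S₁ : HomModuleOn Ac Bset M₁) (S₂ : HomModuleOn Ac Bset M₂) (S₃ : HomModuleOn Ac Bset M₃)
    (f : M₁ →ₗ[k] M₂) (g : M₂ →ₗ[k] M₃),
    IsHomModuleOnHomR Ac Bset S₁ S₂ f → IsHomModuleOnHomR Ac Bset S₂ S₃ g →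
    ∀ (fbar : ((M₁ ⊗[k] A) ⧸ relSubR Ac.mul Ac.aut Bset S₁.act S₁.aut) →ₗ[k]
        ((M₂ ⊗[k] A) ⧸ relSubR Ac.mul Ac.aut Bset S₂.act S₂.aut))
      (gbar : ((M₂ ⊗[k] A) ⧸ relSubR Ac.mul Ac.aut Bset S₂.act S₂.aut) →ₗ[k]
        ((M₃ ⊗[k] A) ⧸ relSubR Ac.mul Ac.aut Bset S₃.act S₃.aut)),
      fbar ∘ₗ (relSubR Ac.mul Ac.aut Bset S₁.act S₁.aut).mkQ =
        (relSubR Ac.mul Ac.aut Bset S₂.act S₂.aut).mkQ ∘ₗ TensorProduct.map f LinearMap.id →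
      gbar ∘ₗ (relSubR Ac.mul Ac.aut Bset S₂.act S₂.aut).mkQ =
        (relSubR Ac.mul Ac.aut Bset S₃.act S₃.aut).mkQ ∘ₗ TensorProduct.map g LinearMap.id →
      (LinearMap.range f = LinearMap.ker g → LinearMap.range fbar = LinearMap.ker gbar)

end

/-!
Let `A ⊗ H` act factorwise on `N ⊗ H`, so that the Hopf compatibility reads
`ρ(n·a) = ρ(n)·ρ(a)`. Applying `(a ⊗ h) ⊗ n ↦ ρ(ν(n))·(a ⊗ h)` to the two sides of the
cotensor equation for `Σ a ⊗ n` gives `ρ(Σ n·a)` on the left and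
`Σ ν(n₍₀₎₍₀₎)·β⁻¹(a) ⊗ α(n₍₀₎₍₁₎)S(n₍₁₎)` on the right. By Hom-coassociativity the latter is
`Σ n₍₀₎·β⁻¹(a) ⊗ α(n₍₁₎₁S(n₍₁₎₂))`, which the antipode and counit axioms collapse to
`Σ ν⁻¹(n)·β⁻¹(a) ⊗ 1 = Σ ν⁻¹(n·a) ⊗ 1`.
-/

section BilinearMap

variable {R M₁ M₂ M₃ N₁ N₂ N₃ : Type*} [CommSemiring R]
  [AddCommMonoid M₁] [Module R M₁] [AddCommMonoid M₂] [Module R M₂]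
  [AddCommMonoid M₃] [Module R M₃] [AddCommMonoid N₁] [Module R N₁]
  [AddCommMonoid N₂] [Module R N₂] [AddCommMonoid N₃] [Module R N₃]

theorem flip_map₂_tmul (f : M₁ →ₗ[R] M₂ →ₗ[R] M₃) (g : N₁ →ₗ[R] N₂ →ₗ[R] N₃) (m : M₂) (n : N₂) :
    (map₂ f g).flip (m ⊗ₜ[R] n) = map (f.flip m) (g.flip n) :=
  TensorProduct.ext' fun _ _ => rfl

theorem map_lift_lift_comp_tensorTensorTensorComm
    (f : M₁ →ₗ[R] M₂ →ₗ[R] M₃) (g : N₁ →ₗ[R] N₂ →ₗ[R] N₃) :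
    map (lift f) (lift g) ∘ₗ (tensorTensorTensorComm R M₁ N₁ M₂ N₂).toLinearMap =
      lift (map₂ f g) :=
  ext_fourfold' fun _ _ _ _ => rfl

end BilinearMap

section HomHopf

variable {k H A M N : Type} [Field k] [AddCommGroup H] [Module k H] [AddCommGroup A] [Module k A]
  [AddCommGroup M] [Module k M] [AddCommGroup N] [Module k N]

theorem mem_cotensorSub_iff {coactM : M →ₗ[k] M ⊗[k] H} {autM : M ≃ₗ[k] M}
    {coactN : N →ₗ[k] H ⊗[k] N} {autN : N ≃ₗ[k] N} {t : M ⊗[k] N} :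
    t ∈ cotensorSub coactM autM coactN autN ↔
      map coactM autN.symm.toLinearMap t =
        (TensorProduct.assoc k M H N).symm (map autM.symm.toLinearMap coactN t) :=
  LinearMap.mem_ker.trans sub_eq_zero

theorem MonoidalHomBialgebra.aut_symm_one (Hb : MonoidalHomBialgebra k H) :
    Hb.aut.symm Hb.one = Hb.one := by
  rw [LinearEquiv.symm_apply_eq, Hb.aut_one]

theorem HomComoduleAlgebra.aut_symm_one {Hb : MonoidalHomBialgebra k H}
    (Ac : HomComoduleAlgebra Hb A) : Ac.aut.symm Ac.one = Ac.one := by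
  rw [LinearEquiv.symm_apply_eq, Ac.aut_one]

namespace MonoidalHomHopf

variable (Hh : MonoidalHomHopf k H)

theorem antipode_one : Hh.antipode Hh.one = Hh.one := by
  have h := LinearMap.congr_fun Hh.antipode_mul_left Hh.one
  simp only [LinearMap.comp_apply, Hh.comul_one, map_tmul, lift.tmul, LinearMap.id_apply,
    Hh.mulOne, Hh.counit_one, LinearMap.toSpanSingleton_apply, one_smul] at h
  exact Hh.aut.injective (h.trans Hh.aut_one.symm)

theorem aut_mul_antipode_comul :
    Hh.aut.toLinearMap ∘ₗ lift Hh.mul ∘ₗ map LinearMap.id Hh.antipode ∘ₗ Hh.comul =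
      LinearMap.toSpanSingleton k H Hh.one ∘ₗ Hh.counit := by
  rw [Hh.antipode_mul_right]
  ext h
  simp [Hh.aut_one]

theorem aut_antipode (h : H) : Hh.aut (Hh.antipode h) = Hh.antipode (Hh.aut h) :=
  (LinearMap.congr_fun Hh.antipode_aut h).symm

end MonoidalHomHopf

namespace HomComodule

section Bialgebra

variable {Hb : MonoidalHomBialgebra k H} (V : HomComodule Hb M)

theorem coact_aut_apply (m : M) :
    V.coact (V.aut m) = map V.aut.toLinearMap Hb.aut.toLinearMap (V.coact m) :=
  LinearMap.congr_fun V.coact_aut m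

theorem aut_symm_mem_coinvSetOf {m : M} (hm : m ∈ coinvSetOf Hb.one V.coact V.aut) :
    V.aut.symm m ∈ coinvSetOf Hb.one V.coact V.aut := by
  have hm' : V.coact m = V.aut.symm m ⊗ₜ[k] Hb.one := hm
  apply (congr V.aut Hb.aut).injective
  calc map V.aut.toLinearMap Hb.aut.toLinearMap (V.coact (V.aut.symm m))
      = V.coact m := by rw [← coact_aut_apply, LinearEquiv.apply_symm_apply]
    _ = congr V.aut Hb.aut (V.aut.symm (V.aut.symm m) ⊗ₜ[k] Hb.one) := by
      rw [hm', congr_tmul, LinearEquiv.apply_symm_apply, Hb.aut_one]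

theorem map_counit_coact (m : M) :
    map LinearMap.id Hb.counit (V.coact m) = V.aut.symm m ⊗ₜ[k] (1 : k) := by
  apply (TensorProduct.rid k M).injective
  rw [rid_tmul, one_smul]
  exact LinearMap.congr_fun V.counit m

/-- The map `H ⊗ M → M ⊗ H`, `h ⊗ m ↦ μ(m)₍₀₎ ⊗ μ(m)₍₁₎ h`, for a right Hom-comodule `(M, μ)`.
The twist by `μ` matches the `ν⁻¹` in the definition of the cotensor product. -/
noncomputable def coactMul : H ⊗[k] M →ₗ[k] M ⊗[k] H :=
  lift ((LinearMap.lTensorHom M ∘ₗ Hb.mul.flip).compl₂ (V.coact ∘ₗ V.aut.toLinearMap))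

@[simp]
theorem coactMul_tmul (h : H) (m : M) :
    V.coactMul (h ⊗ₜ[k] m) = (Hb.mul.flip h).lTensor M (V.coact (V.aut m)) :=
  rfl

end Bialgebra

variable {Hh : MonoidalHomHopf k H} (V : HomComodule Hh.toMonoidalHomBialgebra M)

/-- The left coaction `m ↦ S(m₍₁₎) ⊗ m₍₀₎` obtained from a right Hom-comodule by the antipode. -/
noncomputable def antipodeCoact : M →ₗ[k] H ⊗[k] M :=
  map Hh.antipode LinearMap.id ∘ₗ (TensorProduct.comm k M H).toLinearMap ∘ₗ V.coact

theorem antipodeCoact_of_mem_coinvSetOf {m : M} (hm : m ∈ coinvSetOf Hh.one V.coact V.aut) :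
    V.antipodeCoact m = Hh.one ⊗ₜ[k] V.aut.symm m := by
  have hm' : V.coact m = V.aut.symm m ⊗ₜ[k] Hh.one := hm
  simp [antipodeCoact, hm', Hh.antipode_one]

theorem one_tmul_aut_symm_mem_cotensorSub
    (Ac : HomComoduleAlgebra Hh.toMonoidalHomBialgebra A) {m : M}
    (hm : m ∈ coinvSetOf Hh.one V.coact V.aut) :
    Ac.one ⊗ₜ[k] V.aut.symm m ∈ cotensorSub Ac.coact Ac.aut V.antipodeCoact V.aut := by
  simp [mem_cotensorSub_iff, Ac.coact_one, Ac.aut_symm_one,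
    V.antipodeCoact_of_mem_coinvSetOf (V.aut_symm_mem_coinvSetOf hm)]

theorem coactMul_comp_map_antipode_comp_comm :
    V.coactMul ∘ₗ map Hh.antipode LinearMap.id ∘ₗ (TensorProduct.comm k M H).toLinearMap =
      map V.aut.toLinearMap
          (Hh.aut.toLinearMap ∘ₗ lift Hh.mul ∘ₗ map LinearMap.id Hh.antipode) ∘ₗ
        (TensorProduct.assoc k M H H).toLinearMap ∘ₗ map V.coact Hh.aut.symm.toLinearMap := by
  refine TensorProduct.ext' fun m h => ?_
  simp only [LinearMap.comp_apply, LinearEquiv.coe_coe, comm_tmul, map_tmul, LinearMap.id_apply,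
    coactMul_tmul, coact_aut_apply]
  induction V.coact m with
  | zero => simp
  | add x y hx hy => simp only [map_add, add_tmul, hx, hy]
  | tmul m' h' => simp [Hh.aut_mul, Hh.aut_antipode]

theorem coactMul_antipodeCoact (m : M) :
    V.coactMul (V.antipodeCoact m) = V.aut.symm m ⊗ₜ[k] Hh.one := by
  set mulAntipode := Hh.aut.toLinearMap ∘ₗ lift Hh.mul ∘ₗ map LinearMap.id Hh.antipode
  calc V.coactMul (V.antipodeCoact m)
      = map V.aut.toLinearMap mulAntipode
          (TensorProduct.assoc k M H H
            (map V.coact Hh.aut.symm.toLinearMap (V.coact m))) :=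
      LinearMap.congr_fun V.coactMul_comp_map_antipode_comp_comm (V.coact m)
    _ = map V.aut.toLinearMap mulAntipode
          (map V.aut.symm.toLinearMap Hh.comul (V.coact m)) :=
      congrArg _ (LinearMap.congr_fun V.coassoc m).symm
    _ = map LinearMap.id (LinearMap.toSpanSingleton k H Hh.one ∘ₗ Hh.counit) (V.coact m) := by
      rw [map_map, LinearEquiv.comp_coe, LinearEquiv.symm_trans_self, LinearEquiv.refl_toLinearMap,
        ← Hh.aut_mul_antipode_comul]
      rfl
    _ = map LinearMap.id (LinearMap.toSpanSingleton k H Hh.one)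
          (map LinearMap.id Hh.counit (V.coact m)) := by
      rw [map_map, LinearMap.id_comp]
    _ = V.aut.symm m ⊗ₜ[k] Hh.one := by
      simp [V.map_counit_coact]

end HomComodule

namespace HomHopfModule

section Bialgebra

variable {Hb : MonoidalHomBialgebra k H} {Ac : HomComoduleAlgebra Hb A} (P : HomHopfModule Ac N)

/-- The right Hom-comodule underlying a Hom-Hopf module. -/
abbrev toHomComodule : HomComodule Hb N where
  coact := P.coact
  aut := P.aut
  coassoc := P.coassoc
  counit := P.counit
  coact_aut := P.coact_aut

theorem coact_act (n : N) (a : A) :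
    P.coact (P.act n a) = map₂ P.act Hb.mul (P.coact n) (Ac.coact a) := by
  have h := LinearMap.congr_fun P.compat (n ⊗ₜ[k] a)
  rwa [← LinearMap.comp_assoc, map_lift_lift_comp_tensorTensorTensorComm] at h

theorem aut_symm_act (n : N) (a : A) :
    P.aut.symm (P.act n a) = P.act (P.aut.symm n) (Ac.aut.symm a) := by
  rw [LinearEquiv.symm_apply_eq, P.aut_act, LinearEquiv.apply_symm_apply,
    LinearEquiv.apply_symm_apply]

theorem lift_act_flip_one_tmul_aut_symm (n : N) :
    lift P.act.flip (Ac.one ⊗ₜ[k] P.aut.symm n) = n := by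
  simp [P.act_one]

/-- The map `(A ⊗ H) ⊗ N → N ⊗ H`, `(a ⊗ h) ⊗ n ↦ ν(n)₍₀₎·a ⊗ ν(n)₍₁₎ h`, which is applied to both
sides of the equation defining the cotensor product. -/
noncomputable def coactTensorAct : (A ⊗[k] H) ⊗[k] N →ₗ[k] N ⊗[k] H :=
  lift ((map₂ P.act Hb.mul).flip.compl₂ (P.coact ∘ₗ P.aut.toLinearMap))

theorem coactTensorAct_map_coact (t : A ⊗[k] N) :
    P.coactTensorAct (map Ac.coact P.aut.symm.toLinearMap t) = P.coact (lift P.act.flip t) := by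
  induction t with
  | zero => simp
  | add x y hx hy => simp only [map_add, hx, hy]
  | tmul a n => simp [coactTensorAct, coact_act]

theorem coactTensorAct_assoc_symm_tmul (a : A) (x : H ⊗[k] N) :
    P.coactTensorAct ((TensorProduct.assoc k A H N).symm (a ⊗ₜ[k] x)) =
      (P.act.flip a).rTensor H (P.toHomComodule.coactMul x) := by
  induction x with
  | zero => simp
  | add x y hx hy => simp only [tmul_add, map_add, hx, hy]
  | tmul h n =>
    rw [HomComodule.coactMul_tmul, ← LinearMap.comp_apply, LinearMap.rTensor_comp_lTensor,
      ← flip_map₂_tmul]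
    rfl

end Bialgebra

variable {Hh : MonoidalHomHopf k H} {Ac : HomComoduleAlgebra Hh.toMonoidalHomBialgebra A}
  (P : HomHopfModule Ac N)

theorem coactTensorAct_map_antipodeCoact (t : A ⊗[k] N) :
    P.coactTensorAct ((TensorProduct.assoc k A H N).symm
        (map Ac.aut.symm.toLinearMap P.toHomComodule.antipodeCoact t)) =
      P.aut.symm (lift P.act.flip t) ⊗ₜ[k] Hh.one := by
  induction t with
  | zero => simp
  | add x y hx hy => simp only [map_add, add_tmul, hx, hy]
  | tmul a n =>
    simp only [map_tmul, LinearEquiv.coe_coe, coactTensorAct_assoc_symm_tmul,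
      HomComodule.coactMul_antipodeCoact, LinearMap.rTensor_tmul, LinearMap.flip_apply, lift.tmul,
      aut_symm_act]

theorem lift_act_flip_mem_coinvSetOf {t : A ⊗[k] N}
    (ht : t ∈ cotensorSub Ac.coact Ac.aut P.toHomComodule.antipodeCoact P.aut) :
    lift P.act.flip t ∈ coinvSetOf Hh.one P.coact P.aut :=
  calc P.coact (lift P.act.flip t)
      = P.coactTensorAct (map Ac.coact P.aut.symm.toLinearMap t) :=
      (P.coactTensorAct_map_coact t).symm
    _ = P.coactTensorAct ((TensorProduct.assoc k A H N).symm
          (map Ac.aut.symm.toLinearMap P.toHomComodule.antipodeCoact t)) := by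
      rw [mem_cotensorSub_iff.mp ht]
    _ = P.aut.symm (lift P.act.flip t) ⊗ₜ[k] Hh.one :=
      P.coactTensorAct_map_antipodeCoact t

end HomHopfModule

end HomHopf

/-! STATEMENT 9: For a right (H,A)-Hom-Hopf module `N`, viewed as a left
Hom-comodule via `n ↦ S(n₍₁₎)⊗n₍₀₎`, the maps `i : N^{co H} → A □_H N`,
`i(n) = 1_A ⊗ ν⁻¹(n)`, and `p : A □_H N → N^{co H}`, `p(a⊗n) = n·a`,
are well defined and `p ∘ i = id`. -/
theorem statement9
    (k : Type) [Field k] (H : Type) [AddCommGroup H] [Module k H]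
    (Hh : MonoidalHomHopf k H)
    (A : Type) [AddCommGroup A] [Module k A]
    (Ac : HomComoduleAlgebra Hh.toMonoidalHomBialgebra A)
    (N : Type) [AddCommGroup N] [Module k N]
    (P : HomHopfModule Ac N)
    (coactL : N →ₗ[k] H ⊗[k] N)
    -- the left Hom-comodule structure n ↦ S(n₍₁₎) ⊗ n₍₀₎ on N
    (hcoactL : coactL =
      (TensorProduct.map Hh.antipode LinearMap.id) ∘ₗ
        (TensorProduct.comm k N H).toLinearMap ∘ₗ P.coact) :
    -- (i) i is well defined
    (∀ n ∈ coinvSetOf Hh.one P.coact P.aut,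
        (Ac.one ⊗ₜ[k] P.aut.symm n) ∈ cotensorSub Ac.coact Ac.aut coactL P.aut) ∧
    -- (ii) p is well defined: p(Σ a⊗n) = Σ n·a lands in the coinvariants
    (∀ t ∈ cotensorSub Ac.coact Ac.aut coactL P.aut,
        P.coact ((TensorProduct.lift P.act.flip) t) =
          P.aut.symm ((TensorProduct.lift P.act.flip) t) ⊗ₜ[k] Hh.one) ∧
    -- (iii) p ∘ i = id on N^{co H}
    (∀ n ∈ coinvSetOf Hh.one P.coact P.aut,
        (TensorProduct.lift P.act.flip) (Ac.one ⊗ₜ[k] P.aut.symm n) = n) := by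
  subst hcoactL
  exact ⟨fun _ hn => P.toHomComodule.one_tmul_aut_symm_mem_cotensorSub Ac hn,
    fun _ ht => P.lift_act_flip_mem_coinvSetOf ht,
    fun n _ => P.lift_act_flip_one_tmul_aut_symm n⟩
end

section
/- Let (H,α) be a monoidal Hom-Hopf algebra, (A,β) a right (H,α)-Hom-comodule algebra, and φ:H→A a total integral. Define t:A→A by t(a)=a₍₀₎φ(S(a₍₁₎)). Then t takes values in the coinvariants B=A^{coH}: for every a∈A, ρ_A(t(a)) = β⁻¹(t(a))⊗1_H. -/
open TensorProduct

/-!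
Twisting removes the automorphisms: `α⁻¹ ∘ μ` and `Δ ∘ α` make `H` an ordinary Hopf algebra with
the same antipode, `β⁻¹ ∘ μ` and `ρ ∘ β` make `A` an ordinary comodule algebra over it, and neither
the map `t` nor the coinvariants change.

In the ordinary case, a coaction `ρ : A → A ⊗ H` lets the convolution algebra `Hom(H, A ⊗ H)` act
on `Hom(A, A ⊗ H)` from the right by `(f ↼ g)(a) = f(a₍₀₎) g(a₍₁₎)`. With `i, j` the inclusions of
`A, H` into `A ⊗ H` one has `ρ = i ↼ j`, while anticomultiplicativity of `S` and colinearity of `φ`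
give `ρ ∘ φ ∘ S = (j ∘ S) * (i ∘ φ ∘ S)`. As `j * (j ∘ S) = 1`, it follows that
`ρ ∘ t = (i ↼ j) ↼ ((j ∘ S) * (i ∘ φ ∘ S)) = i ↼ (i ∘ φ ∘ S) = i ∘ t`.
-/

section ConvolutionAction

open LinearMap WithConv Coalgebra HopfAlgebra
open Algebra.TensorProduct (includeLeft includeRight)

variable {R C H M A B : Type*} [CommSemiring R]

section Convolution

variable [AddCommMonoid C] [Module R C] [CoalgebraStruct R C] [Semiring A] [Algebra R A]
  [Semiring B] [Algebra R B]

theorem convMul_includeLeft_includeRight (f : C →ₗ[R] A) (g : C →ₗ[R] B) :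
    toConv ((includeLeft : A →ₐ[R] A ⊗[R] B).toLinearMap ∘ₗ f) *
        toConv ((includeRight : B →ₐ[R] A ⊗[R] B).toLinearMap ∘ₗ g) =
      toConv (TensorProduct.map f g ∘ₗ comul) := by
  have mul_map : mul' R (A ⊗[R] B) ∘ₗ
      TensorProduct.map (includeLeft.toLinearMap ∘ₗ f) (includeRight.toLinearMap ∘ₗ g) =
        TensorProduct.map f g := by
    ext x y; simp
  rw [LinearMap.convMul_def, ← LinearMap.comp_assoc]
  simp only [mul_map]

theorem convMul_includeRight_includeLeft (f : C →ₗ[R] A) (g : C →ₗ[R] B) :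
    toConv ((includeRight : B →ₐ[R] A ⊗[R] B).toLinearMap ∘ₗ g) *
        toConv ((includeLeft : A →ₐ[R] A ⊗[R] B).toLinearMap ∘ₗ f) =
      toConv (TensorProduct.map f g ∘ₗ (TensorProduct.comm R C C).toLinearMap ∘ₗ comul) := by
  have mul_map : mul' R (A ⊗[R] B) ∘ₗ
      TensorProduct.map (includeRight.toLinearMap ∘ₗ g) (includeLeft.toLinearMap ∘ₗ f) =
        TensorProduct.map f g ∘ₗ (TensorProduct.comm R C C).toLinearMap := by
    ext x y; simp
  rw [LinearMap.convMul_def, ← LinearMap.comp_assoc]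
  simp only [mul_map, LinearMap.comp_assoc]

end Convolution

section Antipode

variable [Semiring H] [HopfAlgebra R H] [Semiring B] [Algebra R B]

theorem algHom_convMul_comp_antipode (f : H →ₐ[R] B) :
    toConv f.toLinearMap * toConv (f.toLinearMap ∘ₗ antipode R) = 1 := by
  apply ofConv_injective
  have h := algHom_comp_convMul_distrib f (toConv LinearMap.id) (toConv (antipode R (A := H)))
  rw [id_mul_antipode] at h
  rw [LinearMap.convOne_def] at h ⊢
  exact h.symm.trans (by ext x; simp)

theorem comp_antipode_convMul_algHom (f : H →ₐ[R] B) :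
    toConv (f.toLinearMap ∘ₗ antipode R) * toConv f.toLinearMap = 1 := by
  apply ofConv_injective
  have h := algHom_comp_convMul_distrib f (toConv (antipode R (A := H))) (toConv LinearMap.id)
  rw [antipode_mul_id] at h
  rw [LinearMap.convOne_def] at h ⊢
  exact h.symm.trans (by ext x; simp)

-- `Δ` is the convolution product of the two inclusions `i, j : H → H ⊗ H`, so its convolution
-- inverse `Δ ∘ S` is `(j ∘ S) * (i ∘ S)`.
theorem comul_comp_antipode :
    comul ∘ₗ antipode R =
      TensorProduct.map (antipode R) (antipode R) ∘ₗ (TensorProduct.comm R H H).toLinearMap ∘ₗ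
        comul := by
  let i : H →ₐ[R] H ⊗[R] H := includeLeft
  let j : H →ₐ[R] H ⊗[R] H := includeRight
  have comul_eq : toConv i.toLinearMap * toConv j.toLinearMap = toConv comul := by
    rw [← LinearMap.comp_id i.toLinearMap, ← LinearMap.comp_id j.toLinearMap,
      convMul_includeLeft_includeRight, TensorProduct.map_id, LinearMap.id_comp]
  have right_inv : toConv (comul : H →ₗ[R] H ⊗[R] H) *
      (toConv (j.toLinearMap ∘ₗ antipode R) * toConv (i.toLinearMap ∘ₗ antipode R)) = 1 := by
    rw [← comul_eq, mul_assoc, ← mul_assoc (toConv j.toLinearMap),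
      algHom_convMul_comp_antipode, one_mul, algHom_convMul_comp_antipode]
  apply toConv_injective
  rw [← convMul_includeRight_includeLeft]
  exact left_inv_eq_right_inv (comp_antipode_convMul_algHom (Bialgebra.comulAlgHom R H)) right_inv

end Antipode

section Coaction

variable [AddCommMonoid C] [Module R C] [AddCommMonoid M] [Module R M] [Semiring B] [Algebra R B]

/-- The action `(f ↼ g)(m) = f(m₍₀₎) g(m₍₁₎)` of the convolution algebra `Hom(C, B)` on
`Hom(M, B)` induced by a coaction `ρ` of `C` on `M`. -/
def convAct (ρ : M →ₗ[R] M ⊗[R] C) (f : M →ₗ[R] B) (g : WithConv (C →ₗ[R] B)) : M →ₗ[R] B :=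
  mul' R B ∘ₗ TensorProduct.map f g.ofConv ∘ₗ ρ

theorem convAct_convMul [CoalgebraStruct R C] {ρ : M →ₗ[R] M ⊗[R] C}
    (coassoc : (TensorProduct.assoc R M C C).toLinearMap ∘ₗ TensorProduct.map ρ LinearMap.id ∘ₗ ρ =
      TensorProduct.map LinearMap.id comul ∘ₗ ρ)
    (f : M →ₗ[R] B) (g h : WithConv (C →ₗ[R] B)) :
    convAct ρ f (g * h) = convAct ρ (convAct ρ f g) h := by
  have mul_mul : mul' R B ∘ₗ TensorProduct.map f (mul' R B ∘ₗ TensorProduct.map g.ofConv h.ofConv)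
        ∘ₗ (TensorProduct.assoc R M C C).toLinearMap =
      mul' R B ∘ₗ TensorProduct.map (mul' R B ∘ₗ TensorProduct.map f g.ofConv) h.ofConv := by
    ext x y z; simp [mul_assoc]
  calc convAct ρ f (g * h)
    _ = mul' R B ∘ₗ TensorProduct.map f (mul' R B ∘ₗ TensorProduct.map g.ofConv h.ofConv) ∘ₗ
          TensorProduct.map LinearMap.id comul ∘ₗ ρ := by
        rw [← LinearMap.comp_assoc ρ, ← TensorProduct.map_comp, LinearMap.comp_id]; rfl
    _ = (mul' R B ∘ₗ TensorProduct.map (mul' R B ∘ₗ TensorProduct.map f g.ofConv) h.ofConv) ∘ₗ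
          TensorProduct.map ρ LinearMap.id ∘ₗ ρ := by
        rw [← coassoc, ← mul_mul]; rfl
    _ = convAct ρ (convAct ρ f g) h := by
        rw [LinearMap.comp_assoc, ← LinearMap.comp_assoc ρ, ← TensorProduct.map_comp,
          LinearMap.comp_id]; rfl

theorem algHom_comp_convAct [Semiring A] [Algebra R A] (F : A →ₐ[R] B) (ρ : M →ₗ[R] M ⊗[R] C)
    (f : M →ₗ[R] A) (g : WithConv (C →ₗ[R] A)) :
    F.toLinearMap ∘ₗ convAct ρ f g =
      convAct ρ (F.toLinearMap ∘ₗ f) (toConv (F.toLinearMap ∘ₗ g.ofConv)) := by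
  have map_mul : F.toLinearMap ∘ₗ mul' R A =
      mul' R B ∘ₗ TensorProduct.map F.toLinearMap F.toLinearMap := by
    ext x y; simp
  simp only [convAct, ← LinearMap.comp_assoc, map_mul, TensorProduct.map_comp]

theorem convAct_includeLeft_includeRight [Semiring A] [Algebra R A] [Semiring H] [Algebra R H]
    (ρ : A →ₗ[R] A ⊗[R] H) :
    convAct ρ includeLeft.toLinearMap (toConv includeRight.toLinearMap) = ρ := by
  have mul_map : mul' R (A ⊗[R] H) ∘ₗ
      TensorProduct.map includeLeft.toLinearMap includeRight.toLinearMap = LinearMap.id := by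
    ext x y; simp
  simp only [convAct, ← LinearMap.comp_assoc, mul_map, LinearMap.id_comp]

end Coaction

section Trace

variable [Semiring H] [HopfAlgebra R H] [Semiring A] [Algebra R A]

theorem coaction_comp_comp_antipode {ρ : A →ₗ[R] A ⊗[R] H} {φ : H →ₗ[R] A}
    (colinear : ρ ∘ₗ φ = TensorProduct.map φ LinearMap.id ∘ₗ comul) :
    toConv (ρ ∘ₗ φ ∘ₗ antipode R) =
      toConv (includeRight.toLinearMap ∘ₗ antipode R) *
        toConv (includeLeft.toLinearMap ∘ₗ φ ∘ₗ antipode R) := by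
  rw [convMul_includeRight_includeLeft, ← LinearMap.comp_assoc, colinear, LinearMap.comp_assoc,
    comul_comp_antipode, ← LinearMap.comp_assoc, ← TensorProduct.map_comp, LinearMap.id_comp]

theorem coaction_convAct_comp_antipode {ρ : A →ₐ[R] A ⊗[R] H}
    (coassoc : (TensorProduct.assoc R A H H).toLinearMap ∘ₗ
        TensorProduct.map ρ.toLinearMap LinearMap.id ∘ₗ ρ.toLinearMap =
      TensorProduct.map LinearMap.id comul ∘ₗ ρ.toLinearMap)
    {φ : H →ₗ[R] A}
    (colinear : ρ.toLinearMap ∘ₗ φ = TensorProduct.map φ LinearMap.id ∘ₗ comul) (a : A) :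
    ρ (convAct ρ.toLinearMap LinearMap.id (toConv (φ ∘ₗ antipode R)) a) =
      convAct ρ.toLinearMap LinearMap.id (toConv (φ ∘ₗ antipode R)) a ⊗ₜ[R] 1 := by
  let i : A →ₐ[R] A ⊗[R] H := includeLeft
  let j : H →ₐ[R] A ⊗[R] H := includeRight
  let trace := convAct ρ.toLinearMap LinearMap.id (toConv (φ ∘ₗ antipode R))
  have : ρ.toLinearMap ∘ₗ trace = i.toLinearMap ∘ₗ trace :=
    calc ρ.toLinearMap ∘ₗ trace
      _ = convAct ρ.toLinearMap ρ.toLinearMap (toConv (ρ.toLinearMap ∘ₗ φ ∘ₗ antipode R)) := by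
        rw [algHom_comp_convAct, LinearMap.comp_id]
      _ = convAct ρ.toLinearMap (convAct ρ.toLinearMap i.toLinearMap (toConv j.toLinearMap))
            (toConv (j.toLinearMap ∘ₗ antipode R) *
              toConv (i.toLinearMap ∘ₗ φ ∘ₗ antipode R)) := by
        rw [coaction_comp_comp_antipode colinear, convAct_includeLeft_includeRight]
      _ = convAct ρ.toLinearMap i.toLinearMap (toConv (i.toLinearMap ∘ₗ φ ∘ₗ antipode R)) := by
        rw [← convAct_convMul coassoc, ← mul_assoc, algHom_convMul_comp_antipode, one_mul]
      _ = i.toLinearMap ∘ₗ trace := by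
        rw [algHom_comp_convAct, LinearMap.comp_id]
  exact LinearMap.congr_fun this a

end Trace

end ConvolutionAction

section Untwist

variable {k H A : Type} [Field k] [AddCommGroup H] [Module k H] [AddCommGroup A] [Module k A]

namespace MonoidalHomBialgebra

variable (Hb : MonoidalHomBialgebra k H)

/-- A monoidal Hom-bialgebra as a Hom-comodule algebra over itself, so that untwisting the
Hom-bialgebra is a special case of untwisting a Hom-comodule algebra. -/
abbrev regular : HomComoduleAlgebra Hb H where
  mul := Hb.mul
  one := Hb.one
  aut := Hb.aut
  hom_assoc := Hb.hom_assoc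
  mulOne := Hb.mulOne
  oneMul := Hb.oneMul
  aut_mul := Hb.aut_mul
  aut_one := Hb.aut_one
  coact := Hb.comul
  coassoc := Hb.coassoc.symm
  counit := Hb.counit_right
  coact_aut := Hb.comul_aut
  coact_mul := Hb.comul_mul
  coact_one := Hb.comul_one

end MonoidalHomBialgebra

namespace HomComoduleAlgebra

variable {Hb : MonoidalHomBialgebra k H} (Ac : HomComoduleAlgebra Hb A)

theorem aut_symm_mul (a b : A) :
    Ac.aut.symm (Ac.mul a b) = Ac.mul (Ac.aut.symm a) (Ac.aut.symm b) := by
  rw [LinearEquiv.symm_apply_eq, Ac.aut_mul, LinearEquiv.apply_symm_apply,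
    LinearEquiv.apply_symm_apply]

/-- The ring structure `a * b = β⁻¹(ab)` on a Hom-comodule algebra `(A, β)`. -/
abbrev untwistRing : Ring A :=
  { ‹AddCommGroup A› with
    mul := fun a b => Ac.aut.symm (Ac.mul a b)
    one := Ac.one
    mul_assoc := fun a b c => by
      have h := Ac.hom_assoc (Ac.aut.symm a) (Ac.aut.symm b) (Ac.aut.symm c)
      rw [LinearEquiv.apply_symm_apply, LinearEquiv.apply_symm_apply,
        ← Ac.aut_symm_mul, ← Ac.aut_symm_mul] at h
      exact congrArg Ac.aut.symm h.symm
    one_mul := fun a => Ac.aut.symm_apply_eq.2 (Ac.oneMul a)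
    mul_one := fun a => Ac.aut.symm_apply_eq.2 (Ac.mulOne a)
    left_distrib := fun a b c =>
      (congrArg Ac.aut.symm ((Ac.mul a).map_add b c)).trans (map_add _ _ _)
    right_distrib := fun a b c =>
      (congrArg Ac.aut.symm (Ac.mul.map_add₂ a b c)).trans (map_add _ _ _)
    zero_mul := fun a => (congrArg Ac.aut.symm (Ac.mul.map_zero₂ a)).trans (map_zero _)
    mul_zero := fun a => (congrArg Ac.aut.symm (Ac.mul a).map_zero).trans (map_zero _) }

theorem aut_mul_aut (a b : A) : letI := Ac.untwistRing; Ac.aut a * Ac.aut b = Ac.mul a b :=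
  Ac.aut.symm_apply_eq.2 (Ac.aut_mul a b).symm

/-- The `k`-algebra structure on the ring `untwistRing`, with the given scalar multiplication. -/
abbrev untwistAlgebra : letI := Ac.untwistRing; Algebra k A :=
  letI := Ac.untwistRing
  Algebra.ofModule
    (fun r a b => (congrArg Ac.aut.symm (Ac.mul.map_smul₂ r a b)).trans (map_smul _ _ _))
    (fun r a b => (congrArg Ac.aut.symm ((Ac.mul a).map_smul r b)).trans (map_smul _ _ _))

/-- The coaction `ρ ∘ β` on the algebra underlying a Hom-comodule algebra `(A, β)`. -/
def untwistCoact : A →ₗ[k] A ⊗[k] H :=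
  Ac.coact ∘ₗ Ac.aut.toLinearMap

theorem untwistCoact_eq_map_comp :
    Ac.untwistCoact = TensorProduct.map Ac.aut.toLinearMap Hb.aut.toLinearMap ∘ₗ Ac.coact :=
  Ac.coact_aut

theorem untwistCoact_coassoc :
    (TensorProduct.assoc k A H H).toLinearMap ∘ₗ
        TensorProduct.map Ac.untwistCoact LinearMap.id ∘ₗ Ac.untwistCoact =
      TensorProduct.map LinearMap.id Hb.regular.untwistCoact ∘ₗ Ac.untwistCoact := by
  have map_coact : TensorProduct.map Ac.untwistCoact LinearMap.id =
      TensorProduct.map Ac.coact Hb.aut.symm.toLinearMap ∘ₗ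
        TensorProduct.map Ac.aut.toLinearMap Hb.aut.toLinearMap := by
    rw [← TensorProduct.map_comp, LinearEquiv.symm_comp]; rfl
  have map_comul : TensorProduct.map LinearMap.id Hb.regular.untwistCoact =
      TensorProduct.map Ac.aut.symm.toLinearMap Hb.comul ∘ₗ
        TensorProduct.map Ac.aut.toLinearMap Hb.aut.toLinearMap := by
    rw [← TensorProduct.map_comp, LinearEquiv.symm_comp]; rfl
  have map_aut_comp : TensorProduct.map Ac.aut.toLinearMap Hb.aut.toLinearMap ∘ₗ Ac.untwistCoact =
      Ac.coact ∘ₗ Ac.aut.toLinearMap ∘ₗ Ac.aut.toLinearMap := by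
    rw [untwistCoact, ← LinearMap.comp_assoc, ← Ac.coact_aut, LinearMap.comp_assoc]
  calc (TensorProduct.assoc k A H H).toLinearMap ∘ₗ
        TensorProduct.map Ac.untwistCoact LinearMap.id ∘ₗ Ac.untwistCoact
    _ = ((TensorProduct.assoc k A H H).toLinearMap ∘ₗ
          TensorProduct.map Ac.coact Hb.aut.symm.toLinearMap ∘ₗ Ac.coact) ∘ₗ
            Ac.aut.toLinearMap ∘ₗ Ac.aut.toLinearMap := by
        rw [map_coact, LinearMap.comp_assoc, map_aut_comp]; rfl
    _ = (TensorProduct.map Ac.aut.symm.toLinearMap Hb.comul ∘ₗ Ac.coact) ∘ₗ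
          Ac.aut.toLinearMap ∘ₗ Ac.aut.toLinearMap := by
        rw [Ac.coassoc]
    _ = TensorProduct.map LinearMap.id Hb.regular.untwistCoact ∘ₗ Ac.untwistCoact := by
        rw [map_comul, LinearMap.comp_assoc, LinearMap.comp_assoc, map_aut_comp]

theorem untwistCoact_comp_mul' :
    letI := Ac.untwistRing; letI := Ac.untwistAlgebra
    letI := Hb.regular.untwistRing; letI := Hb.regular.untwistAlgebra
    Ac.untwistCoact ∘ₗ LinearMap.mul' k A =
      LinearMap.mul' k (A ⊗[k] H) ∘ₗ TensorProduct.map Ac.untwistCoact Ac.untwistCoact := by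
  let := Ac.untwistRing; let := Ac.untwistAlgebra
  let := Hb.regular.untwistRing; let := Hb.regular.untwistAlgebra
  have aut_comp_mul' : Ac.aut.toLinearMap ∘ₗ LinearMap.mul' k A = TensorProduct.lift Ac.mul := by
    ext a b; exact Ac.aut.apply_symm_apply _
  have mul'_comp_map_aut : LinearMap.mul' k (A ⊗[k] H) ∘ₗ
      TensorProduct.map (TensorProduct.map Ac.aut.toLinearMap Hb.aut.toLinearMap)
        (TensorProduct.map Ac.aut.toLinearMap Hb.aut.toLinearMap) =
      TensorProduct.map (TensorProduct.lift Ac.mul) (TensorProduct.lift Hb.mul) ∘ₗ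
        (TensorProduct.tensorTensorTensorComm k A H A H).toLinearMap := by
    ext a x b y
    have aut_mul_aut_H : Hb.aut x * Hb.aut y = Hb.mul x y := Hb.regular.aut_mul_aut x y
    simp [Ac.aut_mul_aut, aut_mul_aut_H]
  calc Ac.untwistCoact ∘ₗ LinearMap.mul' k A
    _ = Ac.coact ∘ₗ TensorProduct.lift Ac.mul := by
      rw [untwistCoact, LinearMap.comp_assoc, aut_comp_mul']
    _ = _ := by
      rw [Ac.coact_mul, ← LinearMap.comp_assoc, ← mul'_comp_map_aut, untwistCoact_eq_map_comp,
        TensorProduct.map_comp, LinearMap.comp_assoc]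

/-- The coaction `untwistCoact` as a homomorphism between the untwisted algebras. -/
def untwistCoactHom :
    letI := Ac.untwistRing; letI := Ac.untwistAlgebra
    letI := Hb.regular.untwistRing; letI := Hb.regular.untwistAlgebra
    A →ₐ[k] A ⊗[k] H :=
  letI := Ac.untwistRing; letI := Ac.untwistAlgebra
  letI := Hb.regular.untwistRing; letI := Hb.regular.untwistAlgebra
  AlgHom.ofLinearMap Ac.untwistCoact ((congrArg Ac.coact Ac.aut_one).trans Ac.coact_one)
    fun a b => LinearMap.congr_fun Ac.untwistCoact_comp_mul' (a ⊗ₜ b)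

theorem untwistCoact_eq_tmul_one_iff {a : A} :
    Ac.untwistCoact a = a ⊗ₜ Hb.one ↔ a ∈ coinvA Ac := by
  have map_aut : a ⊗ₜ Hb.one = TensorProduct.congr Ac.aut Hb.aut (Ac.aut.symm a ⊗ₜ Hb.one) := by
    rw [TensorProduct.congr_tmul, LinearEquiv.apply_symm_apply, Hb.aut_one]
  rw [untwistCoact_eq_map_comp, map_aut]
  exact (TensorProduct.congr Ac.aut Hb.aut).injective.eq_iff

theorem untwistCoact_comp {φ : H →ₗ[k] A}
    (comm_aut : φ ∘ₗ Hb.aut.toLinearMap = Ac.aut.toLinearMap ∘ₗ φ)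
    (colinear : Ac.coact ∘ₗ φ = TensorProduct.map φ LinearMap.id ∘ₗ Hb.comul) :
    Ac.untwistCoact ∘ₗ φ = TensorProduct.map φ LinearMap.id ∘ₗ Hb.regular.untwistCoact := by
  rw [untwistCoact, LinearMap.comp_assoc, ← comm_aut, ← LinearMap.comp_assoc, colinear]; rfl

theorem convAct_untwistCoact {f : A →ₗ[k] A} {g : H →ₗ[k] A}
    (hf : f ∘ₗ Ac.aut.toLinearMap = Ac.aut.toLinearMap ∘ₗ f)
    (hg : g ∘ₗ Hb.aut.toLinearMap = Ac.aut.toLinearMap ∘ₗ g) :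
    letI := Ac.untwistRing; letI := Ac.untwistAlgebra
    convAct Ac.untwistCoact f (WithConv.toConv g) =
      TensorProduct.lift Ac.mul ∘ₗ TensorProduct.map f g ∘ₗ Ac.coact := by
  let := Ac.untwistRing; let := Ac.untwistAlgebra
  have mul'_comp_map_aut : LinearMap.mul' k A ∘ₗ
      TensorProduct.map Ac.aut.toLinearMap Ac.aut.toLinearMap = TensorProduct.lift Ac.mul := by
    ext a b; exact Ac.aut_mul_aut a b
  rw [convAct, WithConv.ofConv_toConv, untwistCoact_eq_map_comp, ← mul'_comp_map_aut,
    ← LinearMap.comp_assoc Ac.coact, ← TensorProduct.map_comp, hf, hg, TensorProduct.map_comp]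
  simp only [LinearMap.comp_assoc]

end HomComoduleAlgebra

namespace MonoidalHomBialgebra

variable (Hb : MonoidalHomBialgebra k H)

theorem lTensor_counit_comp_untwistCoact :
    Hb.counit.lTensor H ∘ₗ Hb.regular.untwistCoact = (TensorProduct.mk k H k).flip 1 := by
  apply (LinearMap.cancel_left (TensorProduct.rid k H).injective).1
  refine (congrArg (· ∘ₗ Hb.aut.toLinearMap) Hb.counit_right).trans ?_
  ext a; simp

theorem rTensor_counit_comp_untwistCoact :
    Hb.counit.rTensor H ∘ₗ Hb.regular.untwistCoact = TensorProduct.mk k k H 1 := by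
  apply (LinearMap.cancel_left (TensorProduct.lid k H).injective).1
  refine (congrArg (· ∘ₗ Hb.aut.toLinearMap) Hb.counit_left).trans ?_
  ext a; simp

/-- The coalgebra `(H, Δ ∘ α)` underlying a monoidal Hom-bialgebra `(H, α)`. -/
abbrev untwistCoalgebra : Coalgebra k H where
  comul := Hb.regular.untwistCoact
  counit := Hb.counit
  coassoc := Hb.regular.untwistCoact_coassoc
  rTensor_counit_comp_comul := Hb.rTensor_counit_comp_untwistCoact
  lTensor_counit_comp_comul := Hb.lTensor_counit_comp_untwistCoact

theorem counit_aut_symm (a : H) : Hb.counit (Hb.aut.symm a) = Hb.counit a := by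
  rw [← LinearMap.congr_fun Hb.counit_aut (Hb.aut.symm a)]
  exact congrArg Hb.counit (Hb.aut.apply_symm_apply a)

/-- The bialgebra `(H, α⁻¹ ∘ μ, Δ ∘ α)` underlying a monoidal Hom-bialgebra `(H, α)`. -/
abbrev untwistBialgebra : letI := Hb.regular.untwistRing; Bialgebra k H :=
  letI := Hb.regular.untwistRing
  letI := Hb.regular.untwistAlgebra
  letI := Hb.untwistCoalgebra
  Bialgebra.mk' k H Hb.counit_one
    (fun {a b} => (Hb.counit_aut_symm _).trans (Hb.counit_mul a b))
    (map_one Hb.regular.untwistCoactHom) (map_mul Hb.regular.untwistCoactHom _ _)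

end MonoidalHomBialgebra

namespace MonoidalHomHopf

variable (Hh : MonoidalHomHopf k H)

/-- The Hopf algebra underlying a monoidal Hom-Hopf algebra; the antipode is unchanged. -/
abbrev untwistHopfAlgebra : letI := Hh.regular.untwistRing; HopfAlgebra k H :=
  letI := Hh.regular.untwistRing
  letI := Hh.untwistBialgebra
  have linearMap_eq : Algebra.linearMap k H = LinearMap.toSpanSingleton k H Hh.one := by
    ext; exact Algebra.algebraMap_eq_smul_one (A := H) (1 : k)
  { antipode := Hh.antipode
    mul_antipode_rTensor_comul := by
      rw [linearMap_eq]
      exact (Hh.regular.convAct_untwistCoact (g := LinearMap.id) Hh.antipode_aut rfl).trans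
        Hh.antipode_mul_left
    mul_antipode_lTensor_comul := by
      rw [linearMap_eq]
      exact (Hh.regular.convAct_untwistCoact (f := LinearMap.id) rfl Hh.antipode_aut).trans
        Hh.antipode_mul_right }

end MonoidalHomHopf

end Untwist

theorem statement11_general {k H A : Type} [Field k] [AddCommGroup H] [Module k H]
    [AddCommGroup A] [Module k A] (Hh : MonoidalHomHopf k H)
    (Ac : HomComoduleAlgebra Hh.toMonoidalHomBialgebra A) (φ : H →ₗ[k] A)
    (comm_aut : φ ∘ₗ Hh.aut.toLinearMap = Ac.aut.toLinearMap ∘ₗ φ)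
    (colinear : Ac.coact ∘ₗ φ = TensorProduct.map φ LinearMap.id ∘ₗ Hh.comul) (a : A) :
    (TensorProduct.lift Ac.mul ∘ₗ TensorProduct.map LinearMap.id (φ ∘ₗ Hh.antipode) ∘ₗ Ac.coact) a ∈
      coinvA Ac := by
  let := Ac.untwistRing; let := Ac.untwistAlgebra
  let := Hh.regular.untwistRing; let := Hh.untwistHopfAlgebra
  have comp_antipode_comm_aut : (φ ∘ₗ Hh.antipode) ∘ₗ Hh.aut.toLinearMap =
      Ac.aut.toLinearMap ∘ₗ φ ∘ₗ Hh.antipode := by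
    rw [LinearMap.comp_assoc, Hh.antipode_aut, ← LinearMap.comp_assoc, comm_aut,
      LinearMap.comp_assoc]
  rw [← Ac.untwistCoact_eq_tmul_one_iff,
    ← Ac.convAct_untwistCoact (f := LinearMap.id) rfl comp_antipode_comm_aut]
  exact coaction_convAct_comp_antipode (ρ := Ac.untwistCoactHom) Ac.untwistCoact_coassoc
    (Ac.untwistCoact_comp comm_aut colinear) a

/-! STATEMENT 11: Given a total integral `φ : H → A`, the map
`t(a) = a₍₀₎ φ(S(a₍₁₎))` takes values in the coinvariants `B = A^{co H}`. -/
theorem statement11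
    (k : Type) [Field k] (H : Type) [AddCommGroup H] [Module k H]
    (Hh : MonoidalHomHopf k H)
    (A : Type) [AddCommGroup A] [Module k A]
    (Ac : HomComoduleAlgebra Hh.toMonoidalHomBialgebra A)
    (φ : H →ₗ[k] A) (hφ : IsTotalIntegral Ac φ)
    (t : A →ₗ[k] A)
    -- t(a) = a₍₀₎ · φ(S(a₍₁₎))
    (ht : t =
      (TensorProduct.lift Ac.mul) ∘ₗ
        (TensorProduct.map LinearMap.id (φ ∘ₗ Hh.antipode)) ∘ₗ Ac.coact) :
    ∀ a : A, Ac.coact (t a) = Ac.aut.symm (t a) ⊗ₜ[k] Hh.one := by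
  subst ht
  exact statement11_general Hh Ac φ hφ.1 hφ.2.1
end
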